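/- Let p be a probability mass function on a countable set 𝒳 with finite Shannon entropy H(p). Then there exists a sequence of dyadic probability mass functions q_1, q_2, q_3, … on 𝒳 such that p(x) = ∑_{w=1}^∞ 2^{-w} q_w(x) for every x ∈ 𝒳, and ∑_{w=1}^∞ 2^{-w} H(q_w) ≥ H(p) − 2. -/

import Mathlib

/-- A probability mass function is dyadic if each of its nonzero values is `2^{-j}` for
some nonnegative integer `j`. -/
def IsDyadicPMF {𝒳 : Type*} (q : 𝒳 → ℝ) : Prop :=
  (∀ x, 0 ≤ q x) ∧ (∑' x, q x) = 1 ∧ ∀ x, q x ≠ 0 → ∃ j : ℕ, q x = (2 : ℝ) ^ (-(j : ℤ))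

/-- The Shannon entropy (in bits) of a probability mass function. -/
noncomputable def pmfEntropy {𝒳 : Type*} (q : 𝒳 → ℝ) : ℝ :=
  ∑' x, -(q x) * Real.logb 2 (q x)

/-!
Unless a pmf `p` is a point mass, rounding each positive mass strictly up to a power of `1 / 2`
at most doubles it and pushes the total above one, so finitely many rounded masses already sum to
at least one. A finite family of powers of `1 / 2` with sum at least one has a subfamily with sum
exactly one. So some dyadic `q ≤ 2 * p` exists; then `p = q / 2 + p' / 2` for the pmf
`p' = 2 * p - q`, and iterating on `p'` produces the mixture with weights `2 ^ (-w)`.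

The entropy of a mixture is at most the joint entropy of the index and the outcome, that is, the
entropy of the weights plus the average entropy of the components. The weights `2 ^ (-w)` have
entropy `2`. Concavity of the entropy (in the form of Gibbs' inequality) is what makes the average
entropy of the components finite.
-/

open Filter Function Real
open scoped Topology

lemma exists_nat_sum_inv_pow_eq_div {ι K : Type*} [Field K] [CharZero K] {b : ℕ} (hb : b ≠ 0)
    {j : ι → ℕ} {S : Finset ι} {m : ℕ} (hj : ∀ x ∈ S, j x ≤ m) :
    ∃ N : ℕ, ∑ x ∈ S, ((b : K) ^ j x)⁻¹ = N / b ^ m := by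
  have hb' : (b : K) ≠ 0 := Nat.cast_ne_zero.2 hb
  refine ⟨∑ x ∈ S, b ^ (m - j x), ?_⟩
  push_cast
  rw [Finset.sum_div]
  refine Finset.sum_congr rfl fun x hx => ?_
  rw [pow_sub₀ _ hb' (hj x hx), mul_div_right_comm, div_self (pow_ne_zero m hb'), one_mul]

section LinearOrderedField

variable {K : Type*} [Field K] [LinearOrder K] [IsStrictOrderedRing K]

lemma exists_subset_sum_inv_pow_eq_one {ι : Type*} {b : ℕ} (hb : b ≠ 0) (j : ι → ℕ)
    (S : Finset ι) (hS : 1 ≤ ∑ x ∈ S, ((b : K) ^ j x)⁻¹) :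
    ∃ T ⊆ S, ∑ x ∈ T, ((b : K) ^ j x)⁻¹ = 1 := by
  classical
  induction S using Finset.induction_on_max_value j with
  | empty => exact absurd hS (by simp)
  | insert a S ha hmax ih =>
    by_cases h : 1 ≤ ∑ x ∈ S, ((b : K) ^ j x)⁻¹
    · obtain ⟨T, hTS, hT⟩ := ih h
      exact ⟨T, hTS.trans (Finset.subset_insert a S), hT⟩
    -- All terms are multiples of the smallest one, the `a`-th, so adding it cannot jump over `1`.
    · refine ⟨insert a S, subset_rfl, hS.antisymm' ?_⟩
      obtain ⟨N, hN⟩ := exists_nat_sum_inv_pow_eq_div (K := K) hb hmax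
      have hpos : (0 : K) < b ^ j a := pow_pos (Nat.cast_pos.2 (Nat.pos_of_ne_zero hb)) _
      have hlt : N < b ^ j a := by
        rw [hN, not_le, div_lt_one hpos] at h
        exact_mod_cast h
      rw [Finset.sum_insert ha, hN, inv_eq_one_div, ← add_div, div_le_one hpos, add_comm]
      exact_mod_cast Nat.succ_le_of_lt hlt

lemma exists_lt_inv_pow_le_mul [Archimedean K] {a t : K} (ha : 1 < a) (ht0 : 0 < t)
    (ht1 : t < 1) : ∃ n : ℕ, t < (a ^ n)⁻¹ ∧ (a ^ n)⁻¹ ≤ a * t := by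
  have ha0 : 0 < a := one_pos.trans ha
  obtain ⟨k, hk, hk'⟩ := exists_mem_Ico_zpow ht0 ha
  have hk0 : k < 0 := (zpow_lt_one_iff_right₀ ha).1 (hk.trans_lt ht1)
  obtain ⟨n, hn⟩ := Int.eq_ofNat_of_zero_le (show 0 ≤ -(k + 1) by lia)
  have hpow : (a ^ n)⁻¹ = a ^ (k + 1) := by
    rw [← zpow_natCast, ← zpow_neg, show k + 1 = -(n : ℤ) by lia]
  refine ⟨n, hpow ▸ hk', ?_⟩
  rw [hpow, zpow_add_one₀ ha0.ne', mul_comm]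
  exact mul_le_mul_of_nonneg_left hk ha0.le

end LinearOrderedField

lemma exists_finset_lt_sum_of_hasSum {α : Type*} {f g : α → ℝ} {s : ℝ} (hf : HasSum f s)
    (hfg : ∀ x ∈ support f, f x < g x) (hne : (support f).Nonempty) :
    ∃ S : Finset α, (∀ x ∈ S, x ∈ support f) ∧ s < ∑ x ∈ S, g x := by
  classical
  obtain ⟨a, ha⟩ := hne
  have hclose : ∀ᶠ S : Finset α in atTop, s - (g a - f a) < ∑ x ∈ S, f x :=
    hf.eventually_const_lt (by linarith [hfg a ha])
  obtain ⟨S, hS, haS⟩ := (hclose.and (eventually_ge_atTop {a})).exists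
  set S' := {x ∈ S | f x ≠ 0}
  have hS' : ∀ x ∈ S', x ∈ support f := fun x hx => (Finset.mem_filter.1 hx).2
  have haS' : a ∈ S' := Finset.mem_filter.2 ⟨Finset.singleton_subset_iff.1 haS, ha⟩
  have hgap : g a - f a ≤ ∑ x ∈ S', (g x - f x) :=
    Finset.single_le_sum (f := fun x => g x - f x)
      (fun x hx => (sub_pos.2 (hfg x (hS' x hx))).le) haS'
  rw [Finset.sum_sub_distrib, Finset.sum_filter_ne_zero] at hgap
  exact ⟨S', hS', by linarith⟩

lemma hasSum_prod_of_nonneg {α β : Type*} {f : α × β → ℝ} {g : α → ℝ} {s : ℝ} (hf : 0 ≤ f)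
    (hfg : ∀ a, HasSum (fun b => f (a, b)) (g a)) (hg : HasSum g s) : HasSum f s := by
  have hsum : Summable f := by
    refine (summable_prod_of_nonneg hf).2 ⟨fun a => (hfg a).summable, ?_⟩
    simpa only [(hfg _).tsum_eq] using hg.summable
  rw [← (hsum.hasSum.prod_fiberwise hfg).unique hg]
  exact hsum.hasSum

/-- A real-valued probability mass function. The total mass is prescribed through `HasSum`, so that
no junk value of `tsum` is involved. -/
structure IsPMF {α : Type*} (p : α → ℝ) : Prop where
  nonneg : ∀ x, 0 ≤ p x
  hasSum_one : HasSum p 1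

namespace IsPMF

variable {α : Type*} {p q : α → ℝ}

lemma of_tsum_eq_one (h0 : ∀ x, 0 ≤ p x) (h1 : ∑' x, p x = 1) : IsPMF p := by
  refine ⟨h0, h1 ▸ Summable.hasSum ?_⟩
  by_contra h
  exact one_ne_zero (h1.symm.trans (tsum_eq_zero_of_not_summable h))

lemma le_one (hp : IsPMF p) (x : α) : p x ≤ 1 :=
  le_hasSum hp.hasSum_one x fun y _ => hp.nonneg y

lemma negMulLog_nonneg (hp : IsPMF p) (x : α) : 0 ≤ negMulLog (p x) :=
  Real.negMulLog_nonneg (hp.nonneg x) (hp.le_one x)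

lemma support_nonempty (hp : IsPMF p) : (support p).Nonempty := by
  rw [support_nonempty_iff]
  rintro rfl
  exact zero_ne_one (hasSum_zero.unique hp.hasSum_one)

lemma two_mul_sub (hp : IsPMF p) (hq : IsPMF q) (hqp : ∀ x, q x ≤ 2 * p x) :
    IsPMF fun x => 2 * p x - q x where
  nonneg x := sub_nonneg.2 (hqp x)
  hasSum_one := by
    have h := (hp.hasSum_one.mul_left 2).sub hq.hasSum_one
    rwa [show (2 : ℝ) * 1 - 1 = 1 by norm_num] at h

lemma exists_finset_sum_inv_two_pow_eq_one (hp : IsPMF p) :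
    ∃ (T : Finset α) (j : α → ℕ),
      ∑ x ∈ T, ((2 : ℝ) ^ j x)⁻¹ = 1 ∧ ∀ x ∈ T, ((2 : ℝ) ^ j x)⁻¹ ≤ 2 * p x := by
  by_cases hpoint : ∃ a, p a = 1
  · obtain ⟨a, ha⟩ := hpoint
    exact ⟨{a}, 0, by simp, by simp [ha]⟩
  have hround : ∀ x ∈ support p, ∃ n : ℕ, p x < ((2 : ℝ) ^ n)⁻¹ ∧ ((2 : ℝ) ^ n)⁻¹ ≤ 2 * p x :=
    fun x hx => exists_lt_inv_pow_le_mul one_lt_two ((hp.nonneg x).lt_of_ne' hx)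
      ((hp.le_one x).lt_of_ne fun h => hpoint ⟨x, h⟩)
  choose! j hlt hle using hround
  obtain ⟨S, hSp, hS⟩ := exists_finset_lt_sum_of_hasSum hp.hasSum_one hlt hp.support_nonempty
  obtain ⟨T, hTS, hT⟩ := exists_subset_sum_inv_pow_eq_one (K := ℝ) two_ne_zero j S (mod_cast hS.le)
  exact ⟨T, j, mod_cast hT, fun x hx => hle x (hSp x (hTS hx))⟩

lemma exists_isDyadicPMF_le_two_mul (hp : IsPMF p) :
    ∃ q, IsDyadicPMF q ∧ (support q).Finite ∧ ∀ x, q x ≤ 2 * p x := by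
  obtain ⟨T, j, hsum, hle⟩ := hp.exists_finset_sum_inv_two_pow_eq_one
  refine ⟨(T : Set α).indicator fun x => ((2 : ℝ) ^ j x)⁻¹, ⟨?_, ?_, ?_⟩,
    T.finite_toSet.subset Set.support_indicator_subset, ?_⟩
  · exact Set.indicator_nonneg fun x _ => by positivity
  · rw [← sum_eq_tsum_indicator, hsum]
  · intro x hx
    refine ⟨j x, ?_⟩
    rw [Set.indicator_of_mem (Set.mem_of_indicator_ne_zero hx), zpow_neg, zpow_natCast]
  · exact Set.indicator_le' hle fun x _ => mul_nonneg zero_le_two (hp.nonneg x)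

end IsPMF

lemma IsDyadicPMF.isPMF {α : Type*} {q : α → ℝ} (hq : IsDyadicPMF q) : IsPMF q :=
  .of_tsum_eq_one hq.1 hq.2.1

lemma hasSum_half_pow_succ : HasSum (fun n : ℕ => (1 / 2 : ℝ) ^ (n + 1)) 1 := by
  simpa [pow_succ', div_eq_mul_inv] using hasSum_geometric_two' 1

lemma isPMF_half_pow_succ : IsPMF fun n : ℕ => (1 / 2 : ℝ) ^ (n + 1) :=
  ⟨fun _ => by positivity, hasSum_half_pow_succ⟩

/-- `p` is the mixture of the probability mass functions `q w`, taken with weights `c w`. -/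
structure IsMixture {ι α : Type*} (c : ι → ℝ) (q : ι → α → ℝ) (p : α → ℝ) : Prop where
  weights : IsPMF c
  components : ∀ w, IsPMF (q w)
  hasSum : ∀ x, HasSum (fun w => c w * q w x) (p x)

lemma hasSum_half_pow_mul_of_recurrence {s a : ℕ → ℝ} {C : ℝ} (hs0 : ∀ n, 0 ≤ s n)
    (hsC : ∀ n, s n ≤ C) (ha : ∀ n, 0 ≤ a n) (hsa : ∀ n, s (n + 1) = 2 * s n - a n) :
    HasSum (fun n => (1 / 2 : ℝ) ^ (n + 1) * a n) (s 0) := by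
  have hterm : ∀ n, (1 / 2 : ℝ) ^ (n + 1) * a n
      = (1 / 2) ^ n * s n - (1 / 2) ^ (n + 1) * s (n + 1) := fun n => by rw [hsa]; ring
  have hpartial : ∀ n, ∑ k ∈ Finset.range n, (1 / 2 : ℝ) ^ (k + 1) * a k
      = s 0 - (1 / 2) ^ n * s n := fun n => by
    simp_rw [hterm, Finset.sum_range_sub' (fun k => (1 / 2 : ℝ) ^ k * s k), pow_zero, one_mul]
  have hmajorant : Tendsto (fun n : ℕ => (1 / 2 : ℝ) ^ n * C) atTop (𝓝 0) := by
    simpa using (tendsto_pow_atTop_nhds_zero_of_lt_one (r := (1 / 2 : ℝ))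
      (by norm_num) (by norm_num)).mul_const C
  have hremainder : Tendsto (fun n => (1 / 2 : ℝ) ^ n * s n) atTop (𝓝 0) :=
    squeeze_zero (fun n => mul_nonneg (by positivity) (hs0 n))
      (fun n => mul_le_mul_of_nonneg_left (hsC n) (by positivity)) hmajorant
  rw [hasSum_iff_tendsto_nat_of_nonneg fun n => mul_nonneg (by positivity) (ha n)]
  simpa only [hpartial, sub_zero] using hremainder.const_sub (s 0)

theorem IsPMF.exists_isMixture_isDyadicPMF {α : Type*} {p : α → ℝ} (hp : IsPMF p) :
    ∃ q : ℕ → α → ℝ, (∀ w, IsDyadicPMF (q w)) ∧ (∀ w, (support (q w)).Finite) ∧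
      IsMixture (fun w => (1 / 2) ^ (w + 1)) q p := by
  choose! g hdyadic hfin hle using
    fun (r : α → ℝ) (hr : IsPMF r) => hr.exists_isDyadicPMF_le_two_mul
  let next : (α → ℝ) → α → ℝ := fun r x => 2 * r x - g r x
  have hresidual : ∀ n, IsPMF (next^[n] p) := by
    intro n
    induction n with
    | zero => exact hp
    | succ n ih =>
      rw [iterate_succ_apply']
      exact ih.two_mul_sub (hdyadic _ ih).isPMF (hle _ ih)
  refine ⟨fun n => g (next^[n] p), fun n => hdyadic _ (hresidual n), fun n => hfin _ (hresidual n),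
    isPMF_half_pow_succ, fun n => (hdyadic _ (hresidual n)).isPMF, fun x => ?_⟩
  exact hasSum_half_pow_mul_of_recurrence (s := fun n => next^[n] p x)
    (fun n => (hresidual n).nonneg x) (fun n => (hresidual n).le_one x)
    (fun n => (hdyadic _ (hresidual n)).1 x) (fun n => congrFun (iterate_succ_apply' next n p) x)

lemma mul_neg_log_le_negMulLog {a b : ℝ} (ha : 0 ≤ a) (hab : a ≤ b) :
    a * -log b ≤ negMulLog a := by
  rcases ha.eq_or_lt with rfl | ha
  · simp
  · rw [negMulLog, neg_mul_comm]
    gcongr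

lemma negMulLog_le_mul_neg_log_add_sub {a b : ℝ} (ha : 0 ≤ a) (hb : 0 < b) :
    negMulLog a ≤ a * -log b + (b - a) := by
  rcases ha.eq_or_lt with rfl | ha
  · simpa using hb.le
  · calc negMulLog a = a * -log b + a * log (b / a) := by
          rw [log_div hb.ne' ha.ne', negMulLog]; ring
      _ ≤ a * -log b + a * (b / a - 1) := by
          gcongr
          exact log_le_sub_one_of_pos (div_pos hb ha)
      _ = a * -log b + (b - a) := by field_simp

lemma neg_mul_logb_eq_negMulLog_div_log (b t : ℝ) : -t * logb b t = negMulLog t / log b := by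
  rw [negMulLog, logb, mul_div_assoc]

lemma pmfEntropy_eq_tsum_negMulLog_div_log {α : Type*} (q : α → ℝ) :
    pmfEntropy q = (∑' x, negMulLog (q x)) / log 2 := by
  simp_rw [pmfEntropy, neg_mul_logb_eq_negMulLog_div_log, tsum_div_const]

lemma hasSum_negMulLog_half_pow_succ :
    HasSum (fun n : ℕ => negMulLog ((1 / 2) ^ (n + 1))) (2 * log 2) := by
  have hterm : ∀ n : ℕ, negMulLog ((1 / 2) ^ n) = n * (1 / 2) ^ n * log 2 := fun n => by
    rw [negMulLog, log_pow, one_div, log_inv]; ring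
  have hmean : HasSum (fun n : ℕ => n * (1 / 2 : ℝ) ^ n) 2 := by
    convert! hasSum_coe_mul_geometric_of_norm_lt_one (r := (1 / 2 : ℝ)) (by norm_num) using 1
    norm_num
  have hsum : HasSum (fun n : ℕ => negMulLog ((1 / 2) ^ n)) (2 * log 2) := by
    simpa only [hterm] using hmean.mul_right (log 2)
  simpa using (hasSum_nat_add_iff' 1).2 hsum

lemma pmfEntropy_half_pow_succ : pmfEntropy (fun n : ℕ => (1 / 2) ^ (n + 1)) = 2 := by
  rw [pmfEntropy_eq_tsum_negMulLog_div_log, hasSum_negMulLog_half_pow_succ.tsum_eq,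
    mul_div_cancel_right₀ _ (log_pos one_lt_two).ne']

namespace IsMixture

variable {ι α : Type*} {c : ι → ℝ} {q : ι → α → ℝ} {p : α → ℝ}

lemma joint_nonneg (h : IsMixture c q p) (w : ι) (x : α) : 0 ≤ c w * q w x :=
  mul_nonneg (h.weights.nonneg w) ((h.components w).nonneg x)

lemma joint_le (h : IsMixture c q p) (w : ι) (x : α) : c w * q w x ≤ p x :=
  le_hasSum (h.hasSum x) w fun v _ => h.joint_nonneg v x

lemma isPMF (h : IsMixture c q p) : IsPMF p where
  nonneg x := (h.hasSum x).nonneg fun w => h.joint_nonneg w x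
  hasSum_one := by
    have hjoint : HasSum (fun z : ι × α => c z.1 * q z.1 z.2) 1 :=
      hasSum_prod_of_nonneg (fun z => h.joint_nonneg z.1 z.2)
        (fun w => by simpa using (h.components w).hasSum_one.mul_left (c w)) h.weights.hasSum_one
    exact ((Equiv.prodComm α ι).hasSum_iff.2 hjoint).prod_fiberwise h.hasSum

lemma hasSum_joint_mul_neg_log (h : IsMixture c q p)
    (hp : Summable fun x => negMulLog (p x)) :
    HasSum (fun z : ι × α => c z.1 * q z.1 z.2 * -log (p z.2)) (∑' x, negMulLog (p x)) := by
  refine (Equiv.prodComm α ι).hasSum_iff.1 (hasSum_prod_of_nonneg (fun z => ?_) (fun x => ?_)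
    hp.hasSum)
  · exact mul_nonneg (h.joint_nonneg _ _)
      (neg_nonneg.2 (log_nonpos (h.isPMF.nonneg _) (h.isPMF.le_one _)))
  · rw [negMulLog, neg_mul_comm]
    exact (h.hasSum x).mul_right (-log (p x))

lemma hasSum_mul_negMulLog_weight (h : IsMixture c q p)
    (hc : Summable fun w => negMulLog (c w)) :
    HasSum (fun z : ι × α => q z.1 z.2 * negMulLog (c z.1)) (∑' w, negMulLog (c w)) :=
  hasSum_prod_of_nonneg
    (fun z => mul_nonneg ((h.components z.1).nonneg z.2) (h.weights.negMulLog_nonneg z.1))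
    (fun w => by simpa using (h.components w).hasSum_one.mul_right (negMulLog (c w))) hc.hasSum

lemma weight_mul_negMulLog_le (h : IsMixture c q p) (w : ι) (x : α) :
    c w * negMulLog (q w x) ≤ c w * q w x * -log (p x) + c w * p x := by
  have hc := h.weights.nonneg w
  have hq := (h.components w).nonneg x
  rcases (h.isPMF.nonneg x).eq_or_lt with hp | hp
  · have hcq : c w * q w x = 0 := ((h.joint_le w x).trans_eq hp.symm).antisymm (h.joint_nonneg w x)
    rcases mul_eq_zero.1 hcq with h0 | h0 <;> simp [h0, ← hp]
  · calc c w * negMulLog (q w x) ≤ c w * (q w x * -log (p x) + (p x - q w x)) :=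
          mul_le_mul_of_nonneg_left (negMulLog_le_mul_neg_log_add_sub hq hp) hc
      _ ≤ c w * (q w x * -log (p x) + p x) := by gcongr; linarith
      _ = c w * q w x * -log (p x) + c w * p x := by ring

lemma summable_weight_mul_negMulLog (h : IsMixture c q p)
    (hp : Summable fun x => negMulLog (p x)) :
    Summable fun z : ι × α => c z.1 * negMulLog (q z.1 z.2) :=
  .of_nonneg_of_le
    (fun z => mul_nonneg (h.weights.nonneg z.1) ((h.components z.1).negMulLog_nonneg z.2))
    (fun z => h.weight_mul_negMulLog_le z.1 z.2)
    ((h.hasSum_joint_mul_neg_log hp).summable.add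
      (h.weights.hasSum_one.summable.mul_of_nonneg h.isPMF.hasSum_one.summable
        h.weights.nonneg h.isPMF.nonneg))

lemma hasSum_weight_mul_negMulLog (h : IsMixture c q p)
    (hp : Summable fun x => negMulLog (p x)) :
    HasSum (fun w => c w * ∑' x, negMulLog (q w x))
      (∑' z : ι × α, c z.1 * negMulLog (q z.1 z.2)) := by
  have hsum := h.summable_weight_mul_negMulLog hp
  simp_rw [← tsum_mul_left]
  exact hsum.hasSum.prod_fiberwise fun w => (hsum.prod_factor w).hasSum

-- The left side is at most the joint entropy of index and outcome, which the chain rule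
-- `negMulLog_mul` splits into the two terms on the right.
lemma tsum_negMulLog_le (h : IsMixture c q p) (hc : Summable fun w => negMulLog (c w))
    (hp : Summable fun x => negMulLog (p x)) :
    ∑' x, negMulLog (p x) ≤
      ∑' w, negMulLog (c w) + ∑' w, c w * ∑' x, negMulLog (q w x) := by
  rw [(h.hasSum_weight_mul_negMulLog hp).tsum_eq]
  refine hasSum_le (fun z => ?_) (h.hasSum_joint_mul_neg_log hp)
    ((h.hasSum_mul_negMulLog_weight hc).add (h.summable_weight_mul_negMulLog hp).hasSum)
  rw [← negMulLog_mul]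
  exact mul_neg_log_le_negMulLog (h.joint_nonneg z.1 z.2) (h.joint_le z.1 z.2)

lemma summable_weight_mul_pmfEntropy (h : IsMixture c q p)
    (hp : Summable fun x => negMulLog (p x)) : Summable fun w => c w * pmfEntropy (q w) := by
  simpa only [pmfEntropy_eq_tsum_negMulLog_div_log, mul_div_assoc] using
    (h.hasSum_weight_mul_negMulLog hp).summable.div_const (log 2)

theorem pmfEntropy_le (h : IsMixture c q p) (hc : Summable fun w => negMulLog (c w))
    (hp : Summable fun x => negMulLog (p x)) :
    pmfEntropy p ≤ pmfEntropy c + ∑' w, c w * pmfEntropy (q w) := by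
  simp_rw [pmfEntropy_eq_tsum_negMulLog_div_log, ← mul_div_assoc, tsum_div_const, ← add_div]
  exact div_le_div_of_nonneg_right (h.tsum_negMulLog_le hc hp) (log_pos one_lt_two).le

end IsMixture

theorem stmt12_general {α : Type*} (p : α → ℝ) (hp0 : ∀ x, 0 ≤ p x) (hp1 : (∑' x, p x) = 1)
    (hent : Summable fun x => -(p x) * logb 2 (p x)) :
    ∃ q : ℕ → α → ℝ,
      (∀ w, IsDyadicPMF (q w)) ∧ (∀ w, (support (q w)).Finite) ∧
      (∀ x, HasSum (fun w => (1 / 2) ^ (w + 1) * q w x) (p x)) ∧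
      Summable (fun w => (1 / 2) ^ (w + 1) * pmfEntropy (q w)) ∧
      pmfEntropy p - 2 ≤ ∑' w, (1 / 2) ^ (w + 1) * pmfEntropy (q w) := by
  have hp : IsPMF p := .of_tsum_eq_one hp0 hp1
  have hent' : Summable fun x => negMulLog (p x) := by
    simpa only [neg_mul_logb_eq_negMulLog_div_log,
      summable_div_const_iff (log_pos one_lt_two).ne'] using hent
  obtain ⟨q, hdyadic, hfin, hmix⟩ := hp.exists_isMixture_isDyadicPMF
  have hle := hmix.pmfEntropy_le hasSum_negMulLog_half_pow_succ.summable hent'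
  rw [pmfEntropy_half_pow_succ] at hle
  exact ⟨q, hdyadic, hfin, hmix.hasSum, hmix.summable_weight_mul_pmfEntropy hent',
    sub_le_iff_le_add'.2 hle⟩

/-- Any probability mass function `p` on a countable set `𝒳` with finite Shannon entropy
is a mixture `p(x) = ∑_{w=1}^∞ 2^{-w} q_w(x)` of dyadic probability mass functions `q_w`
satisfying `∑_{w=1}^∞ 2^{-w} H(q_w) ≥ H(p) − 2`. (Here `q w` plays the role of
`q_{w+1}`, so its weight is `2^{-(w+1)}` for `w = 0, 1, 2, …`.) -/
theorem stmt12 {𝒳 : Type*} [Countable 𝒳] (p : 𝒳 → ℝ)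
    (hp0 : ∀ x, 0 ≤ p x) (hp1 : (∑' x, p x) = 1)
    (hent : Summable fun x => -(p x) * Real.logb 2 (p x)) :
    ∃ q : ℕ → 𝒳 → ℝ,
      (∀ w : ℕ, IsDyadicPMF (q w)) ∧
      (∀ x, p x = ∑' w : ℕ, ((1 : ℝ) / 2) ^ (w + 1) * q w x) ∧
      pmfEntropy p - 2 ≤ ∑' w : ℕ, ((1 : ℝ) / 2) ^ (w + 1) * pmfEntropy (q w) := by
  obtain ⟨q, hdyadic, -, hmix, -, hle⟩ := stmt12_general p hp0 hp1 hent
  exact ⟨q, hdyadic, fun x => (hmix x).tsum_eq.symm, hle⟩
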